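/- Let L and S be positive integers with S = L+1, let γ ∈ (0,1) be the positive root of Lγ + Sγ² = 1, let (ξ^j)_{j≥1} be the (L,S)-sequence of points, and let (t_n) be given by t₀ = 1, t₁ = L+S, t_n = L t_{n−1} + S t_{n−2}. Then there exist constants c₂, c₂′ > 0 such that for every integer n ≥ 1 one has c₂′ · log t_n ≤ t_n · D(ξ¹, ξ², …, ξ^{t_n}) ≤ c₂ · log t_n. -/

import Mathlib

open Finset Real

noncomputable section

/-- The `k`-th digit of `n` in base `b`. -/
def lsDigit (b n k : ℕ) : ℕ := n / b ^ k % b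

/-- Membership in the set `N_{L,S}`: for every `k`, the pair of consecutive digits
`(a_k(n), a_{k+1}(n))` in base `L+S` does not lie in
`{L,…,L+S−1} × {1,…,L+S−1}`. -/
def memNLS (L S n : ℕ) : Prop :=
  ∀ k : ℕ, ¬ (L ≤ lsDigit (L + S) n k ∧ lsDigit (L + S) n k ≤ L + S - 1 ∧
      1 ≤ lsDigit (L + S) n (k + 1) ∧ lsDigit (L + S) n (k + 1) ≤ L + S - 1)

/-- The modified digit `ã`: `ã = a` if `a ≤ L−1`, and `ã = L + γ(a−L)` if `L ≤ a`. -/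
def lsTilde (L : ℕ) (γ : ℝ) (a : ℕ) : ℝ :=
  if a < L then (a : ℝ) else (L : ℝ) + γ * ((a : ℝ) - (L : ℝ))

/-- The radical-inverse-type function `φ_{L,S}(n) = Σ_{k=0}^{M} ã_k(n) γ^{k+1}`,
with `M = ⌊log_{L+S} n⌋`. -/
def lsPhi (L S : ℕ) (γ : ℝ) (n : ℕ) : ℝ :=
  ∑ k ∈ Finset.range (Nat.log (L + S) n + 1),
    lsTilde L γ (lsDigit (L + S) n k) * γ ^ (k + 1)

/-- The `(L,S)`-sequence of points: `ξ^j = φ_{L,S}(n_j)` where `n_1 < n_2 < ⋯`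
is the increasing enumeration of `N_{L,S}` (so `n_j = Nat.nth (memNLS L S) (j-1)`). -/
def lsSeq (L S : ℕ) (γ : ℝ) (j : ℕ) : ℝ :=
  lsPhi L S γ (Nat.nth (memNLS L S) (j - 1))

/-- One-dimensional discrepancy of the first `N` terms `x 1, …, x N` of a sequence:
`sup_{0 ≤ a < b ≤ 1} |(1/N) Σ_{j=1}^N χ_{[a,b)}(x j) − (b−a)|`. -/
def discrep (x : ℕ → ℝ) (N : ℕ) : ℝ :=
  ⨆ p : {p : ℝ × ℝ // 0 ≤ p.1 ∧ p.1 < p.2 ∧ p.2 ≤ 1},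
    |(∑ j ∈ Finset.Icc 1 N,
        Set.indicator (Set.Ico p.1.1 p.1.2) (fun _ => (1 : ℝ)) (x j)) / N
      - (p.1.2 - p.1.1)|

/-- Two-dimensional (star) discrepancy of the first `N` terms of a sequence of points
in the unit square:
`sup_{0 < a ≤ 1, 0 < b ≤ 1} |(1/N) Σ_{j=1}^N χ_{[0,a)×[0,b)}(x j) − ab|`. -/
def discrep2 (x : ℕ → ℝ × ℝ) (N : ℕ) : ℝ :=
  ⨆ p : {p : ℝ × ℝ // 0 < p.1 ∧ p.1 ≤ 1 ∧ 0 < p.2 ∧ p.2 ≤ 1},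
    |(∑ j ∈ Finset.Icc 1 N,
        Set.indicator (Set.Ico (0 : ℝ) p.1.1) (fun _ => (1 : ℝ)) (x j).1 *
        Set.indicator (Set.Ico (0 : ℝ) p.1.2) (fun _ => (1 : ℝ)) (x j).2) / N
      - p.1.1 * p.1.2|

/-!
The first `t_n` terms of the `(L,S)`-sequence are the left endpoints `ρ_m`, `m = n + 1`, of the
`n`-th `(L,S)`-partition: splitting off the lowest digit shows that both satisfy
`ρ_{m+2} = ⋃_{i<L} γ (i + ρ_{m+1}) ∪ ⋃_{j<S} (γ L + γ² (j + ρ_m))`.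
Let `N_m = #ρ_m` and `Δ_m(x) = #{z ∈ ρ_m : z < x} - N_m x`. Then
`δ_m := N_m - γ N_{m+1} = (1 - γ) (-S γ)^m`, and self-similarity gives
`Δ_{m+2}(γ (i + y)) = Δ_{m+1}(y) + δ_{m+1} (i + y)` and
`Δ_{m+2}(γ L + γ² (j + y)) = Δ_m(y) - δ_m L γ (S - (j + y))`.
The condition `S = L + 1` says exactly that `S γ = 1`, the case in which `|δ_m|` neither decays nor
grows. Hence every step changes `Δ` by a bounded amount, so that `|Δ_m| = O(m)`, while always
passing to the first short interval, `y ↦ γ L + γ² y`, keeps the sign of `δ_m` fixed and the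
increments add up to a multiple of `m`. Finally `m` is comparable to `log t_n`, because
`γ⁻ⁿ ≤ t_n ≤ γ⁻⁽ⁿ⁺¹⁾`.
-/

section LocalDiscrepancy

/-- The local discrepancy function of a finite multiset `s` of points: the number of points of `s`
below `x`, minus its expected value `#s * x`. It is not divided by `#s`. -/
def localDiscrepancy (s : Multiset ℝ) (x : ℝ) : ℝ :=
  s.countP (· < x) - s.card * x

theorem localDiscrepancy_zero {s : Multiset ℝ} (hs : ∀ z ∈ s, 0 ≤ z) :
    localDiscrepancy s 0 = 0 := by
  have : s.countP (· < 0) = 0 := Multiset.countP_eq_zero.2 fun z hz => (hs z hz).not_gt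
  simp [localDiscrepancy, this]

theorem localDiscrepancy_one {s : Multiset ℝ} (hs : ∀ z ∈ s, z < 1) :
    localDiscrepancy s 1 = 0 := by
  simp [localDiscrepancy, Multiset.countP_eq_card.2 hs]

theorem abs_localDiscrepancy_le_card (s : Multiset ℝ) {x : ℝ} (hx : x ∈ Set.Icc 0 1) :
    |localDiscrepancy s x| ≤ s.card :=
  abs_sub_le_of_nonneg_of_le (by positivity) (by exact_mod_cast s.countP_le_card _)
    (mul_nonneg (by positivity) hx.1) (mul_le_of_le_one_right (by positivity) hx.2)

/-- The first `N` terms `x 1, …, x N` of a sequence, counted with multiplicity. -/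
def firstTerms (x : ℕ → ℝ) (N : ℕ) : Multiset ℝ :=
  (Finset.Icc 1 N).val.map x

theorem card_firstTerms (x : ℕ → ℝ) (N : ℕ) : (firstTerms x N).card = N := by
  simp [firstTerms]

theorem firstTerms_eq_map_range (x : ℕ → ℝ) (N : ℕ) :
    firstTerms x N = (Multiset.range N).map fun j => x (j + 1) := by
  rw [firstTerms, ← zero_add 1, ← Finset.Ico_add_one_right_eq_Icc,
    ← Finset.map_add_right_Ico, ← Finset.range_eq_Ico]
  simp

theorem sum_indicator_Ico_eq_countP_sub (x : ℕ → ℝ) (N : ℕ) {a b : ℝ} (hab : a ≤ b) :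
    ∑ j ∈ Finset.Icc 1 N, Set.indicator (Set.Ico a b) (fun _ => (1 : ℝ)) (x j) =
      (firstTerms x N).countP (· < b) - (firstTerms x N).countP (· < a) := by
  have hcount (c : ℝ) : ((firstTerms x N).countP (· < c) : ℝ) =
      ∑ j ∈ Finset.Icc 1 N, if x j < c then 1 else 0 := by
    rw [firstTerms, Multiset.countP_map, ← Finset.filter_val, Finset.card_val, Finset.sum_boole]
  rw [hcount, hcount, ← Finset.sum_sub_distrib]
  refine Finset.sum_congr rfl fun j _ => ?_
  simp only [Set.indicator_apply, Set.mem_Ico]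
  grind

theorem mul_discrep_eq_iSup (x : ℕ → ℝ) {N : ℕ} (hN : 0 < N) :
    (N : ℝ) * discrep x N = ⨆ p : {p : ℝ × ℝ // 0 ≤ p.1 ∧ p.1 < p.2 ∧ p.2 ≤ 1},
      |localDiscrepancy (firstTerms x N) p.1.2 - localDiscrepancy (firstTerms x N) p.1.1| := by
  have hN' : (0 : ℝ) < N := by exact_mod_cast hN
  rw [discrep, Real.mul_iSup_of_nonneg hN'.le]
  refine iSup_congr fun ⟨⟨a, b⟩, _, hab, _⟩ => ?_
  rw [sum_indicator_Ico_eq_countP_sub x N hab.le, ← abs_of_pos hN', ← abs_mul, abs_of_pos hN']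
  congr 1
  simp only [localDiscrepancy, card_firstTerms]
  field_simp
  ring

theorem mul_discrep_le {x : ℕ → ℝ} {N : ℕ} (hN : 0 < N) {C : ℝ}
    (hC : ∀ y ∈ Set.Icc (0 : ℝ) 1, |localDiscrepancy (firstTerms x N) y| ≤ C) :
    (N : ℝ) * discrep x N ≤ 2 * C := by
  have hC0 : 0 ≤ C := (abs_nonneg _).trans (hC 0 (by simp))
  rw [mul_discrep_eq_iSup x hN]
  refine Real.iSup_le (fun ⟨⟨a, b⟩, ha, hab, hb⟩ => ?_) (by positivity)
  rw [two_mul]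
  exact (abs_sub _ _).trans
    (add_le_add (hC b ⟨ha.trans hab.le, hb⟩) (hC a ⟨ha, hab.le.trans hb⟩))

theorem abs_localDiscrepancy_le_mul_discrep {x : ℕ → ℝ} {N : ℕ} (hN : 0 < N)
    (hx : ∀ z ∈ firstTerms x N, 0 ≤ z) {y : ℝ} (hy : y ∈ Set.Icc 0 1) :
    |localDiscrepancy (firstTerms x N) y| ≤ N * discrep x N := by
  rw [mul_discrep_eq_iSup x hN]
  rcases hy.1.eq_or_lt with rfl | hy0
  · rw [localDiscrepancy_zero hx, abs_zero]
    exact Real.iSup_nonneg fun _ => abs_nonneg _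
  · have hbdd : BddAbove (Set.range
        fun p : {p : ℝ × ℝ // 0 ≤ p.1 ∧ p.1 < p.2 ∧ p.2 ≤ 1} =>
          |localDiscrepancy (firstTerms x N) p.1.2 -
            localDiscrepancy (firstTerms x N) p.1.1|) := by
      refine ⟨(firstTerms x N).card + (firstTerms x N).card,
        Set.forall_mem_range.2 fun ⟨⟨a, b⟩, ha, hab, hb⟩ => ?_⟩
      exact (abs_sub _ _).trans (add_le_add
        (abs_localDiscrepancy_le_card _ ⟨ha.trans hab.le, hb⟩)
        (abs_localDiscrepancy_le_card _ ⟨ha, hab.le.trans hb⟩))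
    simpa [localDiscrepancy_zero hx] using le_ciSup hbdd ⟨(0, y), le_rfl, hy0, hy.2⟩

end LocalDiscrepancy

section UnitTranslates

/-- The union of the `K` consecutive translates `s, 1 + s, …, (K - 1) + s`, a multiset of points of
`[0, K)` when the points of `s` lie in `[0, 1)`. -/
def unitTranslates (K : ℕ) (s : Multiset ℝ) : Multiset ℝ :=
  (Multiset.range K).bind fun i => s.map fun y => (i : ℝ) + y

theorem unitTranslates_succ (K : ℕ) (s : Multiset ℝ) :
    unitTranslates (K + 1) s = s.map (fun y => (K : ℝ) + y) + unitTranslates K s := by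
  simp [unitTranslates, Multiset.range_succ]

theorem card_unitTranslates (K : ℕ) (s : Multiset ℝ) :
    (unitTranslates K s).card = K * s.card := by
  simp [unitTranslates]

theorem mem_Ico_of_mem_unitTranslates {K : ℕ} {s : Multiset ℝ} (hs : ∀ z ∈ s, z ∈ Set.Ico 0 1)
    {z : ℝ} (hz : z ∈ unitTranslates K s) : z ∈ Set.Ico 0 (K : ℝ) := by
  obtain ⟨i, hi, y, hy, rfl⟩ : ∃ i < K, ∃ y ∈ s, (i : ℝ) + y = z := by
    simpa [unitTranslates] using hz
  have hiK : (i : ℝ) + 1 ≤ K := by exact_mod_cast hi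
  have := hs y hy
  exact ⟨add_nonneg i.cast_nonneg this.1, by linarith [this.2]⟩

theorem countP_lt_map_of_strictMono {f : ℝ → ℝ} (hf : StrictMono f) (s : Multiset ℝ) (x : ℝ) :
    (s.map f).countP (· < f x) = s.countP (· < x) := by
  rw [Multiset.countP_map, Multiset.countP_eq_card_filter]
  simp only [hf.lt_iff_lt]

theorem countP_lt_unitTranslates {K k : ℕ} {s : Multiset ℝ} (hs : ∀ z ∈ s, z ∈ Set.Ico 0 1)
    (hk : k < K) {y : ℝ} (hy : y ∈ Set.Icc 0 1) :
    (unitTranslates K s).countP (· < k + y) = k * s.card + s.countP (· < y) := by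
  induction K with
  | zero => omega
  | succ K ih =>
    rw [unitTranslates_succ, Multiset.countP_add]
    rcases Nat.lt_succ_iff_lt_or_eq.1 hk with hkK | rfl
    · have hkK' : (k : ℝ) + 1 ≤ K := by exact_mod_cast hkK
      have hlast : (s.map fun z => (K : ℝ) + z).countP (· < k + y) = 0 := by
        refine Multiset.countP_eq_zero.2 (Multiset.forall_mem_map_iff.2 fun z hz => ?_)
        linarith [(hs z hz).1, hy.2]
      rw [hlast, ih hkK, zero_add]
    · have hinit : (unitTranslates k s).countP (· < k + y) = k * s.card := by
        rw [← card_unitTranslates, Multiset.countP_eq_card]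
        exact fun z hz => (mem_Ico_of_mem_unitTranslates hs hz).2.trans_le (by linarith [hy.1])
      rw [hinit, countP_lt_map_of_strictMono (add_right_strictMono (a := (k : ℝ))), add_comm]

end UnitTranslates

section Endpoints

/-- The left endpoints of the intervals of the `(m - 1)`-st `(L,S)`-partition of `[0, 1)`, which
consists of `L` copies of the `(m - 2)`-nd partition scaled by `γ`, followed by `S` copies of the
`(m - 3)`-rd scaled by `γ ^ 2`. The shift of the index by one makes this recursion produce the
first genuine partition too, from the two trivial ones at `m = 0, 1`. -/
def lsEndpoints (L S : ℕ) (γ : ℝ) : ℕ → Multiset ℝ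
  | 0 => {0}
  | 1 => {0}
  | m + 2 => (unitTranslates L (lsEndpoints L S γ (m + 1))).map (fun y => γ * y) +
      (unitTranslates S (lsEndpoints L S γ m)).map (fun y => γ * L + γ ^ 2 * y)

variable {L S : ℕ} {γ : ℝ}

theorem card_lsEndpoints_add_two (L S : ℕ) (γ : ℝ) (m : ℕ) :
    (lsEndpoints L S γ (m + 2)).card =
      L * (lsEndpoints L S γ (m + 1)).card + S * (lsEndpoints L S γ m).card := by
  simp [lsEndpoints, card_unitTranslates]

theorem card_lsEndpoints_succ_eq (γ : ℝ) {t : ℕ → ℕ} (ht0 : t 0 = 1) (ht1 : t 1 = L + S)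
    (htrec : ∀ n, 2 ≤ n → t n = L * t (n - 1) + S * t (n - 2)) (n : ℕ) :
    (lsEndpoints L S γ (n + 1)).card = t n := by
  induction n using Nat.twoStepInduction with
  | zero => simp [lsEndpoints, ht0]
  | one => rw [card_lsEndpoints_add_two]; simp [lsEndpoints, ht1]
  | more n ih ih' => rw [card_lsEndpoints_add_two, ih, ih', htrec (n + 2) (by omega)]; rfl

theorem mem_Ico_of_mem_lsEndpoints (hγ0 : 0 < γ) (hroot : (L : ℝ) * γ + (S : ℝ) * γ ^ 2 = 1)
    (m : ℕ) : ∀ z ∈ lsEndpoints L S γ m, z ∈ Set.Ico 0 1 := by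
  induction m using Nat.twoStepInduction with
  | zero => simp [lsEndpoints]
  | one => simp [lsEndpoints]
  | more m ih ih' =>
    intro z hz
    rcases Multiset.mem_add.1 hz with hz | hz <;>
      obtain ⟨y, hy, rfl⟩ := Multiset.mem_map.1 hz
    · obtain ⟨hy0, hyL⟩ := mem_Ico_of_mem_unitTranslates ih' hy
      have hlt : γ * y < γ * L := by gcongr
      have hS : 0 ≤ (S : ℝ) * γ ^ 2 := by positivity
      exact ⟨by positivity, by linarith⟩
    · obtain ⟨hy0, hyS⟩ := mem_Ico_of_mem_unitTranslates ih hy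
      have hlt : γ ^ 2 * y < γ ^ 2 * S := by gcongr
      exact ⟨by positivity, by linarith⟩

theorem countP_lsEndpoints_long (hγ0 : 0 < γ) (hroot : (L : ℝ) * γ + (S : ℝ) * γ ^ 2 = 1)
    (m : ℕ) {i : ℕ} (hi : i < L) {y : ℝ} (hy : y ∈ Set.Icc 0 1) :
    (lsEndpoints L S γ (m + 2)).countP (· < γ * (i + y)) =
      i * (lsEndpoints L S γ (m + 1)).card + (lsEndpoints L S γ (m + 1)).countP (· < y) := by
  have hiL : (i : ℝ) + 1 ≤ L := by exact_mod_cast hi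
  have hshort : ((unitTranslates S (lsEndpoints L S γ m)).map
      fun z => γ * L + γ ^ 2 * z).countP (· < γ * (i + y)) = 0 := by
    refine Multiset.countP_eq_zero.2 (Multiset.forall_mem_map_iff.2 fun z hz => not_lt.2 ?_)
    have hz0 := (mem_Ico_of_mem_unitTranslates (mem_Ico_of_mem_lsEndpoints hγ0 hroot m) hz).1
    calc γ * (i + y) ≤ γ * L := by gcongr; linarith [hy.2]
      _ ≤ γ * L + γ ^ 2 * z := le_add_of_nonneg_right (by positivity)
  have hmono : StrictMono fun z : ℝ => γ * z := strictMono_mul_left_of_pos hγ0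
  rw [lsEndpoints, Multiset.countP_add, hshort, countP_lt_map_of_strictMono hmono,
    countP_lt_unitTranslates (mem_Ico_of_mem_lsEndpoints hγ0 hroot _) hi hy, add_zero]

theorem countP_lsEndpoints_short (hγ0 : 0 < γ) (hroot : (L : ℝ) * γ + (S : ℝ) * γ ^ 2 = 1)
    (m : ℕ) {j : ℕ} (hj : j < S) {y : ℝ} (hy : y ∈ Set.Icc 0 1) :
    (lsEndpoints L S γ (m + 2)).countP (· < γ * L + γ ^ 2 * (j + y)) =
      L * (lsEndpoints L S γ (m + 1)).card +
        (j * (lsEndpoints L S γ m).card + (lsEndpoints L S γ m).countP (· < y)) := by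
  have hlong : ((unitTranslates L (lsEndpoints L S γ (m + 1))).map
      fun z => γ * z).countP (· < γ * L + γ ^ 2 * (j + y)) =
        L * (lsEndpoints L S γ (m + 1)).card := by
    rw [← card_unitTranslates, ← Multiset.card_map (fun z => γ * z), Multiset.countP_eq_card]
    refine Multiset.forall_mem_map_iff.2 fun z hz => ?_
    have hzL := (mem_Ico_of_mem_unitTranslates
      (mem_Ico_of_mem_lsEndpoints hγ0 hroot (m + 1)) hz).2
    have hy0 := hy.1
    calc γ * z < γ * L := by gcongr
      _ ≤ γ * L + γ ^ 2 * (j + y) := le_add_of_nonneg_right (by positivity)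
  have hmono : StrictMono fun z : ℝ => γ * L + γ ^ 2 * z :=
    (strictMono_mul_left_of_pos (pow_pos hγ0 2)).const_add _
  rw [lsEndpoints, Multiset.countP_add, hlong, countP_lt_map_of_strictMono hmono,
    countP_lt_unitTranslates (mem_Ico_of_mem_lsEndpoints hγ0 hroot _) hj hy]

theorem exists_eq_natCast_add {K : ℕ} {z : ℝ} (hz : z ∈ Set.Ico 0 (K : ℝ)) :
    ∃ i < K, ∃ y ∈ Set.Ico (0 : ℝ) 1, z = i + y :=
  ⟨⌊z⌋₊, (Nat.floor_lt hz.1).2 hz.2, z - ⌊z⌋₊,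
    ⟨sub_nonneg.2 (Nat.floor_le hz.1), by linarith [Nat.lt_floor_add_one z]⟩, by ring⟩

theorem exists_eq_long_or_short (hγ0 : 0 < γ) (hroot : (L : ℝ) * γ + (S : ℝ) * γ ^ 2 = 1)
    {x : ℝ} (hx : x ∈ Set.Ico 0 1) :
    (∃ i < L, ∃ y ∈ Set.Ico (0 : ℝ) 1, x = γ * (i + y)) ∨
      ∃ j < S, ∃ y ∈ Set.Ico (0 : ℝ) 1, x = γ * L + γ ^ 2 * (j + y) := by
  rcases lt_or_ge x (γ * L) with hxL | hxL
  · obtain ⟨i, hi, y, hy, hxy⟩ := exists_eq_natCast_add (K := L) (z := x / γ)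
      ⟨div_nonneg hx.1 hγ0.le, by rw [div_lt_iff₀ hγ0]; linarith⟩
    exact .inl ⟨i, hi, y, hy, by rw [← hxy]; field_simp⟩
  · have hγ2 : 0 < γ ^ 2 := by positivity
    obtain ⟨j, hj, y, hy, hxy⟩ := exists_eq_natCast_add (K := S) (z := (x - γ * L) / γ ^ 2)
      ⟨div_nonneg (sub_nonneg.2 hxL) hγ2.le, by rw [div_lt_iff₀ hγ2]; linarith [hx.2]⟩
    exact .inr ⟨j, hj, y, hy, by rw [← hxy]; field_simp; ring⟩

theorem card_lsEndpoints_sub (hroot : (L : ℝ) * γ + (S : ℝ) * γ ^ 2 = 1) (m : ℕ) :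
    ((lsEndpoints L S γ m).card : ℝ) - γ * (lsEndpoints L S γ (m + 1)).card =
      (1 - γ) * (-(S * γ)) ^ m := by
  induction m with
  | zero => simp [lsEndpoints]
  | succ m ih =>
    rw [card_lsEndpoints_add_two]
    push_cast
    linear_combination (-(S * γ)) * ih - (lsEndpoints L S γ (m + 1)).card * hroot

theorem pow_mul_card_lsEndpoints_le_one (hγ0 : 0 < γ) (hγ1 : γ ≤ 1)
    (hroot : (L : ℝ) * γ + (S : ℝ) * γ ^ 2 = 1) (m : ℕ) :
    γ ^ m * (lsEndpoints L S γ m).card ≤ 1 := by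
  induction m using Nat.twoStepInduction with
  | zero => simp [lsEndpoints]
  | one => simpa [lsEndpoints] using hγ1
  | more m ih ih' =>
    rw [card_lsEndpoints_add_two]
    push_cast
    calc _ = L * γ * (γ ^ (m + 1) * (lsEndpoints L S γ (m + 1)).card) +
          S * γ ^ 2 * (γ ^ m * (lsEndpoints L S γ m).card) := by ring
      _ ≤ L * γ * 1 + S * γ ^ 2 * 1 := by gcongr
      _ = 1 := by linarith

theorem one_le_pow_mul_card_lsEndpoints_succ (hγ0 : 0 < γ) (hγ1 : γ ≤ 1)
    (hroot : (L : ℝ) * γ + (S : ℝ) * γ ^ 2 = 1) (m : ℕ) :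
    1 ≤ γ ^ m * (lsEndpoints L S γ (m + 1)).card := by
  induction m using Nat.twoStepInduction with
  | zero => simp [lsEndpoints]
  | one =>
    have hSγ : S * γ ^ 2 ≤ S * γ := by gcongr; nlinarith
    rw [card_lsEndpoints_add_two]
    simp only [lsEndpoints, Multiset.card_singleton]
    push_cast
    linarith
  | more m ih ih' =>
    rw [card_lsEndpoints_add_two]
    push_cast
    calc 1 = L * γ * 1 + S * γ ^ 2 * 1 := by linarith
      _ ≤ L * γ * (γ ^ (m + 1) * (lsEndpoints L S γ (m + 2)).card) +
          S * γ ^ 2 * (γ ^ m * (lsEndpoints L S γ (m + 1)).card) := by gcongr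
      _ = _ := by ring

theorem card_lsEndpoints_pos (hL : 0 < L) (γ : ℝ) (m : ℕ) : 0 < (lsEndpoints L S γ m).card := by
  induction m using Nat.twoStepInduction with
  | zero => simp [lsEndpoints]
  | one => simp [lsEndpoints]
  | more m _ ih' =>
    rw [card_lsEndpoints_add_two]
    positivity

theorem log_card_lsEndpoints_le (hL : 0 < L) (hγ0 : 0 < γ) (hγ1 : γ ≤ 1)
    (hroot : (L : ℝ) * γ + (S : ℝ) * γ ^ 2 = 1) (m : ℕ) :
    Real.log (lsEndpoints L S γ m).card ≤ m * -Real.log γ := by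
  have hcard : (0 : ℝ) < (lsEndpoints L S γ m).card := by
    exact_mod_cast card_lsEndpoints_pos hL γ m
  have hlog := Real.log_nonpos (by positivity) (pow_mul_card_lsEndpoints_le_one hγ0 hγ1 hroot m)
  rw [Real.log_mul (by positivity) hcard.ne', Real.log_pow] at hlog
  linarith

theorem le_log_card_lsEndpoints_succ (hL : 0 < L) (hγ0 : 0 < γ) (hγ1 : γ ≤ 1)
    (hroot : (L : ℝ) * γ + (S : ℝ) * γ ^ 2 = 1) (m : ℕ) :
    m * -Real.log γ ≤ Real.log (lsEndpoints L S γ (m + 1)).card := by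
  have hcard : (0 : ℝ) < (lsEndpoints L S γ (m + 1)).card := by
    exact_mod_cast card_lsEndpoints_pos hL γ (m + 1)
  have hlog := Real.log_nonneg (one_le_pow_mul_card_lsEndpoints_succ hγ0 hγ1 hroot m)
  rw [Real.log_mul (by positivity) hcard.ne', Real.log_pow] at hlog
  linarith

theorem localDiscrepancy_lsEndpoints_long (hγ0 : 0 < γ)
    (hroot : (L : ℝ) * γ + (S : ℝ) * γ ^ 2 = 1) (m : ℕ) {i : ℕ} (hi : i < L) {y : ℝ}
    (hy : y ∈ Set.Icc 0 1) :
    localDiscrepancy (lsEndpoints L S γ (m + 2)) (γ * (i + y)) =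
      localDiscrepancy (lsEndpoints L S γ (m + 1)) y +
        (1 - γ) * (-(S * γ)) ^ (m + 1) * (i + y) := by
  rw [← card_lsEndpoints_sub hroot (m + 1), localDiscrepancy, localDiscrepancy,
    countP_lsEndpoints_long hγ0 hroot m hi hy]
  push_cast
  ring

theorem localDiscrepancy_lsEndpoints_short (hγ0 : 0 < γ)
    (hroot : (L : ℝ) * γ + (S : ℝ) * γ ^ 2 = 1) (m : ℕ) {j : ℕ} (hj : j < S) {y : ℝ}
    (hy : y ∈ Set.Icc 0 1) :
    localDiscrepancy (lsEndpoints L S γ (m + 2)) (γ * L + γ ^ 2 * (j + y)) =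
      localDiscrepancy (lsEndpoints L S γ m) y -
        (1 - γ) * (-(S * γ)) ^ m * (L * γ * (S - (j + y))) := by
  have hm := card_lsEndpoints_sub hroot m
  have hm' := card_lsEndpoints_sub hroot (m + 1)
  rw [pow_succ] at hm'
  rw [localDiscrepancy, localDiscrepancy, countP_lsEndpoints_short hγ0 hroot m hj hy]
  push_cast
  linear_combination (L + γ * (j + y)) * hm' + (j + y) * hm
    - (1 - γ) * (-(S * γ)) ^ m * (j + y) * hroot

theorem abs_localDiscrepancy_increment_le (hγ0 : 0 < γ) (hγ1 : γ ≤ 1) (hSγ : S * γ ≤ 1) (k : ℕ)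
    {w : ℝ} (hw : w ∈ Set.Icc 0 (L : ℝ)) : |(1 - γ) * (-(S * γ)) ^ k * w| ≤ L := by
  rw [abs_mul, abs_mul, abs_pow, abs_neg, abs_of_nonneg (by positivity : 0 ≤ S * γ),
    abs_of_nonneg (sub_nonneg.2 hγ1), abs_of_nonneg hw.1]
  have hfactor : (1 - γ) * (S * γ) ^ k ≤ 1 :=
    mul_le_one₀ (by linarith) (by positivity) (pow_le_one₀ (by positivity) hSγ)
  exact (mul_le_of_le_one_left hw.1 hfactor).trans hw.2

theorem abs_localDiscrepancy_lsEndpoints_le (hγ0 : 0 < γ) (hγ1 : γ ≤ 1)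
    (hroot : (L : ℝ) * γ + (S : ℝ) * γ ^ 2 = 1) (hSγ : S * γ ≤ 1) (m : ℕ) {x : ℝ}
    (hx : x ∈ Set.Icc 0 1) :
    |localDiscrepancy (lsEndpoints L S γ m) x| ≤ 1 + L * m := by
  induction m using Nat.twoStepInduction generalizing x with
  | zero => simpa [lsEndpoints] using abs_localDiscrepancy_le_card {0} hx
  | one =>
    have := abs_localDiscrepancy_le_card {0} hx
    rw [Multiset.card_singleton, Nat.cast_one] at this
    exact this.trans (le_add_of_nonneg_right (by positivity))
  | more m ih ih' =>
    rcases hx.2.eq_or_lt with rfl | hx1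
    · rw [localDiscrepancy_one fun z hz => (mem_Ico_of_mem_lsEndpoints hγ0 hroot _ z hz).2,
        abs_zero]
      positivity
    push_cast at ih' ⊢
    rcases exists_eq_long_or_short hγ0 hroot ⟨hx.1, hx1⟩ with
      ⟨i, hi, y, hy, rfl⟩ | ⟨j, hj, y, hy, rfl⟩ <;>
      have hyI := Set.Ico_subset_Icc_self hy
    · have hiL : (i : ℝ) + 1 ≤ L := by exact_mod_cast hi
      have hw : i + y ∈ Set.Icc 0 (L : ℝ) :=
        ⟨add_nonneg i.cast_nonneg hy.1, by linarith [hy.2]⟩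
      rw [localDiscrepancy_lsEndpoints_long hγ0 hroot m hi hyI]
      linarith [abs_add_le (localDiscrepancy (lsEndpoints L S γ (m + 1)) y)
        ((1 - γ) * (-(S * γ)) ^ (m + 1) * (i + y)), ih' hyI,
        abs_localDiscrepancy_increment_le hγ0 hγ1 hSγ (m + 1) hw]
    · have hjS : (j : ℝ) + 1 ≤ S := by exact_mod_cast hj
      have hS0 : 0 ≤ S - (j + y) := by linarith [hy.2]
      have hSS : S - (j + y) ≤ S := by linarith [hy.1, j.cast_nonneg (α := ℝ)]
      have hw : L * γ * (S - (j + y)) ∈ Set.Icc 0 (L : ℝ) := by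
        refine ⟨by positivity, ?_⟩
        calc L * γ * (S - (j + y)) ≤ L * γ * S := by gcongr
          _ = L * (S * γ) := by ring
          _ ≤ L := mul_le_of_le_one_right (by positivity) hSγ
      rw [localDiscrepancy_lsEndpoints_short hγ0 hroot m hj hyI]
      linarith [abs_sub (localDiscrepancy (lsEndpoints L S γ m) y)
        ((1 - γ) * (-(S * γ)) ^ m * (L * γ * (S - (j + y)))), ih hyI,
        abs_localDiscrepancy_increment_le hγ0 hγ1 hSγ m hw, L.cast_nonneg (α := ℝ)]

theorem neg_one_pow_mul_localDiscrepancy_first_short (hS : 0 < S) (hγ0 : 0 < γ)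
    (hroot : (L : ℝ) * γ + (S : ℝ) * γ ^ 2 = 1) (m : ℕ) {y : ℝ} (hy : y ∈ Set.Icc 0 1) :
    (-1) ^ (m + 3) * localDiscrepancy (lsEndpoints L S γ (m + 2)) (γ * L + γ ^ 2 * y) =
      (-1) ^ (m + 1) * localDiscrepancy (lsEndpoints L S γ m) y +
        (S * γ) ^ m * (L * γ * (1 - γ) * (S - y)) := by
  have hshort := localDiscrepancy_lsEndpoints_short hγ0 hroot m hS hy
  rw [Nat.cast_zero, zero_add, neg_pow (S * γ)] at hshort
  have hsign : ((-1 : ℝ) ^ m) ^ 2 = 1 := by rw [← pow_mul, mul_comm, pow_mul, neg_one_sq, one_pow]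
  rw [hshort]
  linear_combination (S * γ) ^ m * (L * γ * (1 - γ) * (S - y)) * hsign

theorem exists_le_localDiscrepancy_lsEndpoints (hS : 0 < S) (hγ0 : 0 < γ) (hγ1 : γ ≤ 1)
    (hroot : (L : ℝ) * γ + (S : ℝ) * γ ^ 2 = 1) (hSγ : 1 ≤ S * γ) (m : ℕ) :
    ∃ x ∈ Set.Icc (0 : ℝ) 1, L * γ * (1 - γ) * (S - 1) * (m - 1) ≤
      2 * ((-1) ^ (m + 1) * localDiscrepancy (lsEndpoints L S γ m) x) := by
  have hS1 : (1 : ℝ) ≤ S := by exact_mod_cast hS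
  have : 0 ≤ 1 - γ := sub_nonneg.2 hγ1
  have hκ : 0 ≤ L * γ * (1 - γ) * (S - 1) := mul_nonneg (by positivity) (sub_nonneg.2 hS1)
  have hzero (k : ℕ) : localDiscrepancy (lsEndpoints L S γ k) 0 = 0 :=
    localDiscrepancy_zero fun z hz => (mem_Ico_of_mem_lsEndpoints hγ0 hroot k z hz).1
  induction m using Nat.twoStepInduction with
  | zero => exact ⟨0, by simp, by simpa [hzero] using hκ⟩
  | one => exact ⟨0, by simp, by simp [hzero]⟩
  | more m ih _ =>
    obtain ⟨y, hy, hle⟩ := ih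
    have hy0 := hy.1
    have hyS : γ ^ 2 * y ≤ γ ^ 2 * S := by gcongr; exact hy.2.trans hS1
    refine ⟨γ * L + γ ^ 2 * y, ⟨by positivity, by linarith⟩, ?_⟩
    have hgain : L * γ * (1 - γ) * (S - 1) ≤ (S * γ) ^ m * (L * γ * (1 - γ) * (S - y)) :=
      calc L * γ * (1 - γ) * (S - 1) ≤ (S * γ) ^ m * (L * γ * (1 - γ) * (S - 1)) :=
            le_mul_of_one_le_left hκ (one_le_pow₀ hSγ)
        _ ≤ (S * γ) ^ m * (L * γ * (1 - γ) * (S - y)) := by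
            gcongr
            exact hy.2
    rw [neg_one_pow_mul_localDiscrepancy_first_short hS hγ0 hroot m hy]
    push_cast
    linarith

end Endpoints


section Enumeration

theorem lsDigit_add_mul_zero {b a : ℕ} (q : ℕ) (ha : a < b) : lsDigit b (a + b * q) 0 = a := by
  simp [lsDigit, Nat.mod_eq_of_lt ha]

theorem lsDigit_add_mul_succ {b a : ℕ} (q k : ℕ) (ha : a < b) :
    lsDigit b (a + b * q) (k + 1) = lsDigit b q k := by
  have hb : 0 < b := a.zero_le.trans_lt ha
  rw [lsDigit, lsDigit, pow_succ', ← Nat.div_div_eq_div_mul, Nat.add_mul_div_left _ _ hb,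
    Nat.div_eq_of_lt ha, zero_add]

theorem memNLS_zero (L S : ℕ) : memNLS L S 0 := by
  simp [memNLS, lsDigit]

theorem memNLS_add_mul_iff {L S a : ℕ} (q : ℕ) (ha : a < L + S) :
    memNLS L S (a + (L + S) * q) ↔ (L ≤ a → q % (L + S) = 0) ∧ memNLS L S q := by
  have hq : q % (L + S) < L + S := Nat.mod_lt _ (by omega)
  have hq0 : lsDigit (L + S) q 0 = q % (L + S) := by simp [lsDigit]
  simp only [memNLS]
  rw [← Nat.and_forall_add_one]
  simp only [lsDigit_add_mul_zero q ha, zero_add, lsDigit_add_mul_succ q _ ha, hq0]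
  exact and_congr_left' (by omega)

theorem lsTilde_of_lt {L a : ℕ} (γ : ℝ) (ha : a < L) : lsTilde L γ a = a :=
  if_pos ha

theorem lsTilde_add (L : ℕ) (γ : ℝ) (j : ℕ) : lsTilde L γ (L + j) = L + γ * j := by
  simp [lsTilde]

theorem lsPhi_zero {L : ℕ} (S : ℕ) (γ : ℝ) (hL : 0 < L) : lsPhi L S γ 0 = 0 := by
  simp [lsPhi, lsDigit, lsTilde_of_lt γ hL]

theorem lsPhi_add_mul {L S a : ℕ} (γ : ℝ) (q : ℕ) (hL : 0 < L) (hS : 0 < S)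
    (ha : a < L + S) :
    lsPhi L S γ (a + (L + S) * q) = γ * (lsTilde L γ a + lsPhi L S γ q) := by
  rcases q.eq_zero_or_pos with rfl | hq
  · have hdigit := lsDigit_add_mul_zero 0 ha
    rw [mul_zero, add_zero] at hdigit ⊢
    rw [lsPhi_zero S γ hL, lsPhi, Nat.log_of_lt ha, zero_add, Finset.sum_range_one, hdigit]
    ring
  · have hb : 1 < L + S := by omega
    have hlog : Nat.log (L + S) (a + (L + S) * q) = Nat.log (L + S) q + 1 := by
      rw [Nat.log_of_one_lt_of_le hb (by nlinarith), Nat.add_mul_div_left _ _ (by omega),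
        Nat.div_eq_of_lt ha, zero_add]
    rw [lsPhi, lsPhi, hlog, Finset.sum_range_succ', lsDigit_add_mul_zero q ha, mul_add,
      Finset.mul_sum, add_comm, zero_add, pow_one, mul_comm γ]
    congr 1
    refine Finset.sum_congr rfl fun k _ => ?_
    rw [lsDigit_add_mul_succ q k ha]
    ring

theorem range_mul_eq_bind (b K : ℕ) : Multiset.range (b * K) =
    (Multiset.range b).bind fun a => (Multiset.range K).map fun q => a + b * q := by
  induction K with
  | zero => simp
  | succ K ih =>
    simp only [Multiset.range_succ, Multiset.map_cons, Multiset.bind_cons, ← ih]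
    rw [Nat.mul_succ, Multiset.range_add, add_comm]
    simp only [add_comm]

open scoped Classical in
/-- The elements of `N_{L,S}` with at most `n` digits in base `L + S`. -/
def nlsBelow (L S n : ℕ) : Multiset ℕ :=
  (Multiset.range ((L + S) ^ n)).filter (memNLS L S)

theorem nlsBelow_zero (L S : ℕ) : nlsBelow L S 0 = {0} := by
  rw [nlsBelow, pow_zero, show Multiset.range 1 = {0} from rfl, Multiset.filter_singleton,
    if_pos (memNLS_zero L S)]

theorem nlsBelow_succ (L S n : ℕ) : nlsBelow L S (n + 1) =
    ((Multiset.range L).bind fun a => (nlsBelow L S n).map fun q => a + (L + S) * q) +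
      (Multiset.range S).bind fun j =>
        ((nlsBelow L S n).filter fun q => q % (L + S) = 0).map fun q => L + j + (L + S) * q := by
  classical
  rw [nlsBelow, pow_succ', range_mul_eq_bind, Multiset.filter_bind, Multiset.range_add,
    Multiset.add_bind, Multiset.bind_map]
  congr 1
  · refine Multiset.bind_congr fun a ha => ?_
    have haL := Multiset.mem_range.1 ha
    rw [Multiset.filter_map, nlsBelow]
    congr 1
    refine Multiset.filter_congr fun q _ => ?_
    simp [memNLS_add_mul_iff q (haL.trans_le (Nat.le_add_right L S)), haL.not_ge]
  · refine Multiset.bind_congr fun j hj => ?_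
    have hjS := Multiset.mem_range.1 hj
    rw [Multiset.filter_map, nlsBelow, Multiset.filter_filter]
    congr 1
    refine Multiset.filter_congr fun q _ => ?_
    simp [memNLS_add_mul_iff q (Nat.add_lt_add_left hjS L)]

theorem filter_mod_nlsBelow_succ {L : ℕ} (hL : 0 < L) (S n : ℕ) :
    (nlsBelow L S (n + 1)).filter (fun q => q % (L + S) = 0) =
      (nlsBelow L S n).map fun q => (L + S) * q := by
  classical
  have hb : 0 < L + S := by omega
  refine (Multiset.Nodup.ext
    (((Multiset.nodup_range _).filter _).filter _)
    (((Multiset.nodup_range _).filter _).map (mul_right_injective₀ hb.ne'))).2 fun a => ?_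
  have hmem (q : ℕ) : memNLS L S ((L + S) * q) ↔ memNLS L S q := by
    simpa [hL.ne'] using memNLS_add_mul_iff q hb
  simp only [Multiset.mem_filter, Multiset.mem_map, Multiset.mem_range]
  constructor
  · rintro ⟨⟨hlt, ha⟩, hmod⟩
    obtain ⟨q, rfl⟩ := Nat.dvd_of_mod_eq_zero hmod
    exact ⟨q, ⟨Nat.lt_of_mul_lt_mul_left (pow_succ' (L + S) n ▸ hlt), (hmem q).1 ha⟩, rfl⟩
  · rintro ⟨q, ⟨hlt, hq⟩, rfl⟩
    exact ⟨⟨pow_succ' (L + S) n ▸ Nat.mul_lt_mul_of_pos_left hlt hb, (hmem q).2 hq⟩,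
      Nat.mul_mod_right _ _⟩

theorem map_lsPhi_nlsBelow {L S : ℕ} (γ : ℝ) (hL : 0 < L) (hS : 0 < S) (n : ℕ) :
    (nlsBelow L S n).map (lsPhi L S γ) = lsEndpoints L S γ (n + 1) ∧
      ((nlsBelow L S n).filter fun q => q % (L + S) = 0).map (lsPhi L S γ) =
        (lsEndpoints L S γ n).map fun y => γ * y := by
  induction n with
  | zero => simp [nlsBelow_zero, lsEndpoints, lsPhi_zero S γ hL, Multiset.filter_singleton]
  | succ n ih =>
    obtain ⟨ih, ih_mod⟩ := ih
    constructor
    · rw [nlsBelow_succ, lsEndpoints, Multiset.map_add, unitTranslates, unitTranslates]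
      simp only [Multiset.map_bind]
      congr 1
      · refine Multiset.bind_congr fun i hi => ?_
        have hiL := Multiset.mem_range.1 hi
        have hφ (q : ℕ) : lsPhi L S γ (i + (L + S) * q) = γ * (i + lsPhi L S γ q) := by
          rw [lsPhi_add_mul γ q hL hS (by omega), lsTilde_of_lt γ hiL]
        simp only [← ih, Multiset.map_map, Function.comp_def, hφ]
      · refine Multiset.bind_congr fun j hj => ?_
        have hjS := Multiset.mem_range.1 hj
        have hφ (q : ℕ) : lsPhi L S γ (L + j + (L + S) * q) =
            γ * (L + γ * j + lsPhi L S γ q) := by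
          rw [lsPhi_add_mul γ q hL hS (by omega), lsTilde_add]
        calc _ = (((nlsBelow L S n).filter fun q => q % (L + S) = 0).map (lsPhi L S γ)).map
              fun y => γ * (L + γ * j + y) := by simp only [Multiset.map_map, Function.comp_def, hφ]
          _ = _ := by
            rw [ih_mod]
            simp only [Multiset.map_map, Function.comp_def]
            exact Multiset.map_congr rfl fun y _ => by ring
    · rw [filter_mod_nlsBelow_succ hL, ← ih, Multiset.map_map, Multiset.map_map]
      refine Multiset.map_congr rfl fun q _ => ?_
      have h0 := lsPhi_add_mul γ q hL hS (a := 0) (by omega)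
      simpa [lsTilde_of_lt γ hL] using h0

theorem map_nth_range_count (p : ℕ → Prop) [DecidablePred p] (N : ℕ) :
    (Multiset.range (Nat.count p N)).map (Nat.nth p) = (Multiset.range N).filter p := by
  induction N with
  | zero => simp
  | succ N ih =>
    rw [Nat.count_succ, Multiset.range_succ]
    by_cases h : p N
    · simp [h, Multiset.range_succ, ih, Nat.nth_count h]
    · simp [h, ih]

theorem firstTerms_lsSeq {L S : ℕ} (γ : ℝ) (hL : 0 < L) (hS : 0 < S) (n : ℕ) :
    firstTerms (lsSeq L S γ) (lsEndpoints L S γ (n + 1)).card = lsEndpoints L S γ (n + 1) := by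
  classical
  have hnth : (Multiset.range (Nat.count (memNLS L S) ((L + S) ^ n))).map
      (Nat.nth (memNLS L S)) = nlsBelow L S n := map_nth_range_count _ _
  rw [← (map_lsPhi_nlsBelow γ hL hS n).1, ← hnth, firstTerms_eq_map_range, Multiset.map_map,
    Multiset.card_map, Multiset.card_range]
  rfl

end Enumeration

section Discrepancy

variable {L S : ℕ} {γ : ℝ}

theorem mul_discrep_lsSeq_le (hL : 0 < L) (hS : 0 < S) (hγ0 : 0 < γ) (hγ1 : γ ≤ 1)
    (hroot : (L : ℝ) * γ + (S : ℝ) * γ ^ 2 = 1) (hSγ : S * γ ≤ 1) (n : ℕ) :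
    (lsEndpoints L S γ (n + 1)).card *
      discrep (lsSeq L S γ) (lsEndpoints L S γ (n + 1)).card ≤ 2 * (1 + L * (n + 1)) := by
  refine mul_discrep_le (card_lsEndpoints_pos hL γ _) fun y hy => ?_
  rw [firstTerms_lsSeq γ hL hS]
  exact_mod_cast abs_localDiscrepancy_lsEndpoints_le hγ0 hγ1 hroot hSγ (n + 1) hy

theorem le_mul_discrep_lsSeq (hL : 0 < L) (hS : 0 < S) (hγ0 : 0 < γ) (hγ1 : γ ≤ 1)
    (hroot : (L : ℝ) * γ + (S : ℝ) * γ ^ 2 = 1) (hSγ : 1 ≤ S * γ) (n : ℕ) :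
    L * γ * (1 - γ) * (S - 1) / 2 * n ≤ (lsEndpoints L S γ (n + 1)).card *
      discrep (lsSeq L S γ) (lsEndpoints L S γ (n + 1)).card := by
  have hterms := firstTerms_lsSeq γ hL hS n
  obtain ⟨x, hx, hle⟩ := exists_le_localDiscrepancy_lsEndpoints hS hγ0 hγ1 hroot hSγ (n + 1)
  have hdiscrep := abs_localDiscrepancy_le_mul_discrep (card_lsEndpoints_pos hL γ _)
    (fun z hz => (mem_Ico_of_mem_lsEndpoints hγ0 hroot (n + 1) z (hterms ▸ hz)).1) hx
  rw [hterms] at hdiscrep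
  have habs : (-1) ^ (n + 1 + 1) * localDiscrepancy (lsEndpoints L S γ (n + 1)) x ≤
      |localDiscrepancy (lsEndpoints L S γ (n + 1)) x| :=
    (le_abs_self _).trans_eq (by simp [abs_mul])
  push_cast at hle
  linarith

theorem mul_discrep_lsSeq_le_log (hL : 0 < L) (hS : 0 < S) (hγ0 : 0 < γ) (hγ1 : γ < 1)
    (hroot : (L : ℝ) * γ + (S : ℝ) * γ ^ 2 = 1) (hSγ : S * γ ≤ 1) {n : ℕ} (hn : 1 ≤ n) :
    (lsEndpoints L S γ (n + 1)).card *
        discrep (lsSeq L S γ) (lsEndpoints L S γ (n + 1)).card ≤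
      2 * (1 + 2 * L) / -Real.log γ * Real.log (lsEndpoints L S γ (n + 1)).card := by
  have hn1 : (1 : ℝ) ≤ n := by exact_mod_cast hn
  have hlogγ : 0 < -Real.log γ := neg_pos.2 (Real.log_neg hγ0 hγ1)
  have hlogγ_ne : Real.log γ ≠ 0 := neg_ne_zero.1 hlogγ.ne'
  calc _ ≤ 2 * (1 + L * (n + 1 : ℝ)) := mul_discrep_lsSeq_le hL hS hγ0 hγ1.le hroot hSγ n
    _ ≤ 2 * (1 * n + L * (n + n)) := by gcongr; rwa [one_mul]
    _ = 2 * (1 + 2 * L) / -Real.log γ * (n * -Real.log γ) := by field_simp; ring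
    _ ≤ _ := by
      gcongr
      exact le_log_card_lsEndpoints_succ hL hγ0 hγ1.le hroot n

theorem log_le_mul_discrep_lsSeq (hL : 0 < L) (hS : 0 < S) (hγ0 : 0 < γ) (hγ1 : γ < 1)
    (hroot : (L : ℝ) * γ + (S : ℝ) * γ ^ 2 = 1) (hSγ : 1 ≤ S * γ) {n : ℕ} (hn : 1 ≤ n) :
    L * γ * (1 - γ) * (S - 1) / (4 * -Real.log γ) *
        Real.log (lsEndpoints L S γ (n + 1)).card ≤
      (lsEndpoints L S γ (n + 1)).card *
        discrep (lsSeq L S γ) (lsEndpoints L S γ (n + 1)).card := by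
  have hn1 : (1 : ℝ) ≤ n := by exact_mod_cast hn
  have hS1 : 0 ≤ (S : ℝ) - 1 := sub_nonneg.2 (by exact_mod_cast hS)
  have : 0 ≤ 1 - γ := sub_nonneg.2 hγ1.le
  have hlogγ : 0 < -Real.log γ := neg_pos.2 (Real.log_neg hγ0 hγ1)
  have hlogγ_ne : Real.log γ ≠ 0 := neg_ne_zero.1 hlogγ.ne'
  calc _ ≤ L * γ * (1 - γ) * (S - 1) / (4 * -Real.log γ) * ((n + 1 : ℕ) * -Real.log γ) := by
        gcongr
        exact log_card_lsEndpoints_le hL hγ0 hγ1.le hroot (n + 1)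
    _ ≤ L * γ * (1 - γ) * (S - 1) / (4 * -Real.log γ) * ((n + n) * -Real.log γ) := by
        push_cast
        gcongr
    _ = L * γ * (1 - γ) * (S - 1) / 2 * n := by field_simp; ring
    _ ≤ _ := le_mul_discrep_lsSeq hL hS hγ0 hγ1.le hroot hSγ n

theorem add_one_mul_root_eq_one (hγ0 : 0 < γ)
    (hroot : (L : ℝ) * γ + ((L : ℝ) + 1) * γ ^ 2 = 1) : ((L : ℝ) + 1) * γ = 1 := by
  have hfactor : (((L : ℝ) + 1) * γ - 1) * (γ + 1) = 0 := by linear_combination hroot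
  rcases mul_eq_zero.1 hfactor with h | h <;> linarith

end Discrepancy

/-- If `S = L+1`, then
`c₂′ log t_n ≤ t_n · D(ξ¹,…,ξ^{t_n}) ≤ c₂ log t_n` for all `n ≥ 1`. -/
theorem ls_partition_discrepancy_S_eq_L_add_one (L S : ℕ) (hL : 0 < L) (hS : 0 < S)
    (hSL : S = L + 1)
    (γ : ℝ) (hγ0 : 0 < γ) (hγ1 : γ < 1)
    (hroot : (L : ℝ) * γ + (S : ℝ) * γ ^ 2 = 1)
    (t : ℕ → ℕ) (ht0 : t 0 = 1) (ht1 : t 1 = L + S)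
    (htrec : ∀ n, 2 ≤ n → t n = L * t (n - 1) + S * t (n - 2)) :
    ∃ c₂ c₂' : ℝ, 0 < c₂ ∧ 0 < c₂' ∧ ∀ n : ℕ, 1 ≤ n →
      c₂' * Real.log (t n) ≤ (t n : ℝ) * discrep (lsSeq L S γ) (t n) ∧
      (t n : ℝ) * discrep (lsSeq L S γ) (t n) ≤ c₂ * Real.log (t n) := by
  have ht (n : ℕ) : t n = (lsEndpoints L S γ (n + 1)).card :=
    (card_lsEndpoints_succ_eq γ ht0 ht1 htrec n).symm
  have hScast : (S : ℝ) = L + 1 := by exact_mod_cast hSL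
  have hSγ : S * γ = 1 := by
    rw [hScast] at hroot ⊢
    exact add_one_mul_root_eq_one hγ0 hroot
  have hL0 : (0 : ℝ) < L := by exact_mod_cast hL
  have hS1 : 0 < (S : ℝ) - 1 := by linarith
  have : 0 < 1 - γ := sub_pos.2 hγ1
  have hlogγ : 0 < -Real.log γ := neg_pos.2 (Real.log_neg hγ0 hγ1)
  refine ⟨2 * (1 + 2 * L) / -Real.log γ, L * γ * (1 - γ) * (S - 1) / (4 * -Real.log γ),
    by positivity, by positivity, fun n hn => ?_⟩
  rw [ht n]
  exact ⟨log_le_mul_discrep_lsSeq hL hS hγ0 hγ1 hroot hSγ.ge hn,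
    mul_discrep_lsSeq_le_log hL hS hγ0 hγ1 hroot hSγ.le hn⟩
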